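/- arXiv:2204.06865 — 3 statements merged into one kernel-verified Lean document; each statement's English description precedes it below -/
import Mathlib

section
/- Let A be a nonzero commutative noetherian ring with Krull dimension d (possibly infinite). Then for every natural number n with n ≤ d there exists an A-module M whose projective dimension over A is exactly n. -/
/-!
STATEMENT 7: Let A be a nonzero commutative noetherian ring with Krull dimension d
(possibly infinite).  Then for every natural number n with n ≤ d there exists an
A-module M whose projective dimension over A is exactly n.
-/

open CategoryTheory

universe u

/-- `Ext_A^i(M, N)` as an `A`-module. -/
noncomputable abbrev extGroup (A : Type u) [CommRing A] (M N : ModuleCat.{u} A) (i : ℕ) :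
    ModuleCat A :=
  ((Ext A (ModuleCat.{u} A) i).obj (Opposite.op M)).obj N

/-- The projective dimension of an `A`-module `M`, defined as the least `n : ℕ∞` such that
`Ext_A^i(M, N) = 0` for every `A`-module `N` and every `i > n` (and `∞` if no such `n` exists). -/
noncomputable def projDim (A : Type u) [CommRing A] (M : ModuleCat.{u} A) : ℕ∞ :=
  sInf {n : ℕ∞ | ∀ (N : ModuleCat.{u} A) (i : ℕ), n < (i : ℕ∞) →
    Subsingleton (extGroup A M N i)}

/-!
Let `s ∈ A`, let `rs` be a weakly regular sequence of length `n` on `T = A[1/s]` and put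
`M = T / (rs) T`. The resolution `0 → A[X] → A[X] → T → 0`, whose first map is multiplication by
`sX - 1`, gives `projdim T ≤ 1`, hence `projdim M ≤ n + 1`. For a module `N` killed by `rs`,
dimension shifting embeds `Ext¹(T, N)` into `Ext^{n+1}(M, N)`. With `N = ⊕_ℕ A / (rs)`, the
vanishing of `Ext¹(T, N)` forces `sⁱ ∈ (rs) + (sⁱ⁺¹)` for some `i`, which is impossible when `s`
lies in a prime `p` but not in some prime `(rs) ⊆ q ⊆ p`.

Such `s`, `rs` and `q ⊆ p` exist as soon as `A` has a chain of primes of length `n + 1`: at each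
stage, inverting a suitable element leaves only one associated prime for the next element of the
sequence to avoid.
-/

open TensorProduct RingTheory.Sequence

section ProjDim

variable {A : Type u} [CommRing A]

lemma subsingleton_extGroup_succ_iff (M N : ModuleCat.{u} A) (i : ℕ) :
    Subsingleton (extGroup A M N (i + 1)) ↔ Subsingleton (Abelian.Ext.{u} M N (i + 1)) := by
  let P := projectiveResolution M
  have e : extGroup A M N (i + 1) ≅ (P.complex.linearYonedaObj A N).homology (i + 1) :=
    P.isoExt (R := A) (i + 1) N
  rw [← ModuleCat.isZero_iff_subsingleton, e.isZero_iff,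
    ← HomologicalComplex.exactAt_iff_isZero_homology,
    HomologicalComplex.exactAt_iff' _ i (i + 1) (i + 2) (by simp) (by simp),
    ShortComplex.moduleCat_exact_iff]
  change (∀ f : P.complex.X (i + 1) ⟶ N, P.complex.d (i + 2) (i + 1) ≫ f = 0 →
    ∃ g : P.complex.X i ⟶ N, P.complex.d (i + 1) i ≫ g = f) ↔ _
  refine ⟨fun h ↦ subsingleton_of_forall_eq 0 fun α ↦ ?_, fun _ f hf ↦ ?_⟩
  · obtain ⟨f, hf, rfl⟩ := P.extMk_surjective α (i + 2) rfl
    exact (P.extMk_eq_zero_iff f (i + 2) rfl hf i rfl).2 (h f hf)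
  · exact (P.extMk_eq_zero_iff f (i + 2) rfl hf i rfl).1 (Subsingleton.elim _ _)

lemma projDim_le_natCast_iff (M : ModuleCat.{u} A) (n : ℕ) :
    projDim A M ≤ n ↔ HasProjectiveDimensionLE M n := by
  constructor
  · intro h
    obtain ⟨m, hm, hmn⟩ : ∃ m ∈ _, m < ((n + 1 : ℕ) : ℕ∞) :=
      sInf_lt_iff.1 (h.trans_lt (by exact_mod_cast n.lt_succ_self))
    refine (hasProjectiveDimensionLT_iff M (n + 1)).2 fun i hi N α ↦ ?_
    obtain ⟨i, rfl⟩ : ∃ j, i = j + 1 := ⟨i - 1, by lia⟩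
    have := (subsingleton_extGroup_succ_iff M N i).1
      (hm N (i + 1) (hmn.trans_le (by exact_mod_cast hi)))
    exact Subsingleton.elim α 0
  · refine fun _ ↦ sInf_le fun N i hi ↦ ?_
    have hi : n < i := by exact_mod_cast hi
    obtain ⟨i, rfl⟩ : ∃ j, i = j + 1 := ⟨i - 1, by lia⟩
    exact (subsingleton_extGroup_succ_iff M N i).2
      (HasProjectiveDimensionLT.subsingleton M (n + 1) (i + 1) hi N)

lemma projDim_eq_succ (M N : ModuleCat.{u} A) (n : ℕ) [HasProjectiveDimensionLE M (n + 1)]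
    (hN : ¬ Subsingleton (Abelian.Ext.{u} M N (n + 1))) : projDim A M = (n + 1 : ℕ) := by
  refine le_antisymm ((projDim_le_natCast_iff M (n + 1)).2 inferInstance) ?_
  by_contra! hlt
  have := (projDim_le_natCast_iff M n).1 (Order.le_of_lt_add_one (by exact_mod_cast hlt))
  exact hN (HasProjectiveDimensionLT.subsingleton M (n + 1) (n + 1) le_rfl N)

end ProjDim

lemma subsingleton_ext_of_iso {C : Type*} [Category* C] [Abelian C] [HasExt C] {X Y N : C} {n : ℕ}
    (e : X ≅ Y) [Subsingleton (Abelian.Ext Y N n)] : Subsingleton (Abelian.Ext X N n) := by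
  refine subsingleton_of_forall_eq 0 fun α ↦ ?_
  have : (Abelian.Ext.mk₀ e.hom).comp ((Abelian.Ext.mk₀ e.inv).comp α (zero_add n))
      (zero_add n) = α := by simp
  rw [← this, Subsingleton.elim ((Abelian.Ext.mk₀ e.inv).comp α (zero_add n)) 0,
    Abelian.Ext.comp_zero]

section WeaklyRegular

variable {A : Type u} [CommRing A] {M : Type u} [AddCommGroup M] [Module A M]

lemma hasProjectiveDimensionLT_quotSMulTop {a : A} (ha : IsSMulRegular M a) (m : ℕ)
    [hM : HasProjectiveDimensionLT (ModuleCat.of A M) m] :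
    HasProjectiveDimensionLT (ModuleCat.of A (QuotSMulTop a M)) (m + 1) :=
  (IsSMulRegular.smulShortComplex_shortExact (M := .of A M) ha).hasProjectiveDimensionLT_X₃ m hM
    (hasProjectiveDimensionLT_of_ge (ModuleCat.of A M) m (m + 1) m.le_succ)

lemma subsingleton_ext_of_quotSMulTop {a : A} (ha : IsSMulRegular M a) {N : ModuleCat.{u} A}
    (haN : a ∈ Module.annihilator A N) (m : ℕ)
    [hExt : Subsingleton (Abelian.Ext.{u} (ModuleCat.of A (QuotSMulTop a M)) N (m + 1))] :
    Subsingleton (Abelian.Ext.{u} (ModuleCat.of A M) N m) := by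
  have hN : a • 𝟙 N = 0 := by
    ext x
    exact Module.mem_annihilator.1 haN x
  have mk₀_smul_id_comp (β : Abelian.Ext.{u} (ModuleCat.of A M) N m) :
      (Abelian.Ext.mk₀ (a • 𝟙 (ModuleCat.of A M))).comp β (zero_add m) = 0 := by
    rw [Abelian.Ext.mk₀_smul, Abelian.Ext.smul_comp, Abelian.Ext.mk₀_id_comp,
      Abelian.Ext.smul_eq_comp_mk₀, hN, Abelian.Ext.mk₀_zero, Abelian.Ext.comp_zero]
  refine subsingleton_of_forall_eq 0 fun α ↦ ?_
  obtain ⟨β, rfl⟩ := Abelian.Ext.contravariant_sequence_exact₁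
    (IsSMulRegular.smulShortComplex_shortExact (M := .of A M) ha) N α (add_comm 1 m)
    (hExt.elim _ _)
  exact mk₀_smul_id_comp β

lemma hasProjectiveDimensionLT_quotient_of_isWeaklyRegular {rs : List A}
    (hrs : IsWeaklyRegular M rs) (m : ℕ) [hM : HasProjectiveDimensionLT (ModuleCat.of A M) m] :
    HasProjectiveDimensionLT
      (ModuleCat.of A (M ⧸ (Ideal.ofList rs • ⊤ : Submodule A M))) (m + rs.length) := by
  induction rs generalizing M m with
  | nil =>
    exact hasProjectiveDimensionLT_of_iso
      (Submodule.quotEquivOfEqBot _ (by simp)).symm.toModuleIso m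
  | cons a rs ih =>
    rw [isWeaklyRegular_cons_iff] at hrs
    have := hasProjectiveDimensionLT_quotSMulTop hrs.1 m
    rw [List.length_cons, add_comm rs.length, ← add_assoc]
    have := ih hrs.2 (m + 1)
    exact hasProjectiveDimensionLT_of_iso
      (Submodule.quotOfListConsSMulTopEquivQuotSMulTopInner M a rs).symm.toModuleIso _

lemma subsingleton_ext_of_isWeaklyRegular {rs : List A} (hrs : IsWeaklyRegular M rs)
    {N : ModuleCat.{u} A} (hN : ∀ r ∈ rs, r ∈ Module.annihilator A N) (m : ℕ)
    [hExt : Subsingleton (Abelian.Ext.{u}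
      (ModuleCat.of A (M ⧸ (Ideal.ofList rs • ⊤ : Submodule A M))) N (m + rs.length))] :
    Subsingleton (Abelian.Ext.{u} (ModuleCat.of A M) N m) := by
  induction rs generalizing M m with
  | nil =>
    let e : (M ⧸ (Ideal.ofList ([] : List A) • ⊤ : Submodule A M)) ≃ₗ[A] M :=
      Submodule.quotEquivOfEqBot _ (by simp)
    exact subsingleton_ext_of_iso e.symm.toModuleIso
  | cons a rs ih =>
    rw [isWeaklyRegular_cons_iff] at hrs
    rw [List.forall_mem_cons] at hN
    rw [List.length_cons, add_comm rs.length, ← add_assoc] at hExt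
    have := subsingleton_ext_of_iso (N := N) (n := m + 1 + rs.length)
      (Submodule.quotOfListConsSMulTopEquivQuotSMulTopInner M a rs).symm.toModuleIso
    have := ih hrs.2 hN.2 (m + 1)
    exact subsingleton_ext_of_quotSMulTop hrs.1 hN.1 m

end WeaklyRegular

section ShortExact

variable {A : Type u} [CommRing A]

lemma shortExact_of_exact {L M P : Type u} [AddCommGroup L] [Module A L] [AddCommGroup M]
    [Module A M] [AddCommGroup P] [Module A P] {f : L →ₗ[A] M} {g : M →ₗ[A] P}
    (hf : Function.Injective f) (hfg : Function.Exact f g) (hg : Function.Surjective g) :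
    (ModuleCat.shortComplexOfCompEqZero f g hfg.linearMap_comp_eq_zero).ShortExact :=
  ModuleCat.shortComplex_shortExact _ hfg hf hg

lemma exists_comp_eq_of_subsingleton_ext {L M P N : Type u} [AddCommGroup L] [Module A L]
    [AddCommGroup M] [Module A M] [AddCommGroup P] [Module A P] [AddCommGroup N] [Module A N]
    {f : L →ₗ[A] M} {g : M →ₗ[A] P}
    (hf : Function.Injective f) (hfg : Function.Exact f g) (hg : Function.Surjective g)
    [hN : Subsingleton (Abelian.Ext.{u} (ModuleCat.of A P) (ModuleCat.of A N) 1)]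
    (φ : L →ₗ[A] N) : ∃ ψ : M →ₗ[A] N, ψ ∘ₗ f = φ := by
  obtain ⟨α, hα⟩ := Abelian.Ext.contravariant_sequence_exact₁ (shortExact_of_exact hf hfg hg)
    (ModuleCat.of A N) (Abelian.Ext.mk₀ (ModuleCat.ofHom φ)) (add_zero 1) (hN.elim _ _)
  obtain ⟨ψ, rfl⟩ := (Abelian.Ext.mk₀_bijective _ _).2 α
  rw [Abelian.Ext.mk₀_comp_mk₀, (Abelian.Ext.mk₀_bijective _ _).1.eq_iff] at hα
  exact ⟨ψ.hom, congr(ModuleCat.Hom.hom $hα)⟩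

end ShortExact

section Away

open Polynomial

variable {A : Type u} [CommRing A] (s : A)

lemma injective_mulLeft_C_mul_X_sub_one :
    Function.Injective (LinearMap.mulLeft A (C s * X - 1 : A[X])) := by
  have : C s * X - 1 ∈ nonZeroDivisors A[X] :=
    Polynomial.mem_nonZeroDivisors_iff.2 fun a ha ↦ by simpa using congr(coeff $ha 0)
  exact isLeftRegular_iff_mem_nonZeroDivisorsLeft.2 this.1

/-- The presentation of `A[1/s]` as a quotient of `A[X]`, sending `X` to `1/s`; its kernel is
generated by `sX - 1`. -/
noncomputable def polynomialToAway : A[X] →ₐ[A] Localization.Away s :=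
  (Localization.awayEquivAdjoin s).symm.toAlgHom.comp (AdjoinRoot.mkₐ (C s * X - 1))

lemma polynomialToAway_surjective : Function.Surjective (polynomialToAway s) :=
  (Localization.awayEquivAdjoin s).symm.surjective.comp AdjoinRoot.mk_surjective

lemma exact_mulLeft_polynomialToAway :
    Function.Exact (LinearMap.mulLeft A (C s * X - 1 : A[X])) (polynomialToAway s).toLinearMap := by
  intro f
  change (Localization.awayEquivAdjoin s).symm (AdjoinRoot.mk _ f) = 0 ↔
    ∃ g, (C s * X - 1) * g = f
  rw [map_eq_zero_iff _ (AlgEquiv.injective _), AdjoinRoot.mk_eq_zero]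
  exact exists_congr fun _ ↦ eq_comm

instance hasProjectiveDimensionLE_one_away :
    HasProjectiveDimensionLE (ModuleCat.of A (Localization.Away s)) 1 := by
  have : Projective (ModuleCat.of A A[X]) := (IsProjective.iff_projective _).1 inferInstance
  have resolution := shortExact_of_exact (injective_mulLeft_C_mul_X_sub_one s)
    (exact_mulLeft_polynomialToAway s) (polynomialToAway_surjective s)
  exact resolution.hasProjectiveDimensionLT_X₃ 1
    (inferInstanceAs (HasProjectiveDimensionLT (ModuleCat.of A A[X]) 1))
    (inferInstanceAs (HasProjectiveDimensionLT (ModuleCat.of A A[X]) (1 + 1)))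

lemma exists_smul_sub_eq_of_subsingleton_ext_away {N : Type u} [AddCommGroup N] [Module A N]
    [Subsingleton (Abelian.Ext.{u} (ModuleCat.of A (Localization.Away s)) (ModuleCat.of A N) 1)]
    (x : ℕ → N) : ∃ y : ℕ → N, ∀ i, s • y (i + 1) - y i = x i := by
  obtain ⟨ψ, hψ⟩ := exists_comp_eq_of_subsingleton_ext (injective_mulLeft_C_mul_X_sub_one s)
    (exact_mulLeft_polynomialToAway s) (polynomialToAway_surjective s)
    ((Polynomial.basisMonomials A).constr A x)
  refine ⟨fun i ↦ ψ (X ^ i), fun i ↦ ?_⟩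
  have eq_x : ψ ((C s * X - 1) * X ^ i) = x i := by
    have := (LinearMap.congr_fun hψ (basisMonomials A i)).trans (Module.Basis.constr_basis _ A x i)
    simpa only [coe_basisMonomials, monomial_one_right_eq_X_pow, LinearMap.comp_apply,
      LinearMap.mulLeft_apply] using this
  rw [← eq_x, ← map_smul, ← map_sub, sub_mul, mul_assoc, ← pow_succ', one_mul, smul_eq_C_mul]

lemma exists_pow_smul_eq_of_subsingleton_ext_away {N : Type u} [AddCommGroup N] [Module A N]
    [Subsingleton
      (Abelian.Ext.{u} (ModuleCat.of A (Localization.Away s)) (ModuleCat.of A (ℕ →₀ N)) 1)]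
    (x : N) : ∃ (i : ℕ) (y : N), s ^ i • x = s ^ (i + 1) • y := by
  obtain ⟨y, hy⟩ := exists_smul_sub_eq_of_subsingleton_ext_away s fun i ↦ Finsupp.single i x
  have y_zero_eq (n : ℕ) :
      y 0 = s ^ n • y n - ∑ i ∈ Finset.range n, s ^ i • Finsupp.single i x := by
    induction n with
    | zero => simp
    | succ n ih =>
      rw [ih, Finset.sum_range_succ, ← hy n, pow_succ]
      module
  -- At a coordinate `i` where `y 0` vanishes, `y_zero_eq (i + 1)` only involves `y (i + 1)`.
  obtain ⟨i, hi⟩ := Infinite.exists_notMem_finset (y 0).support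
  have y_zero_apply : 0 = s ^ (i + 1) • y (i + 1) i - s ^ i • x := by
    rw [← Finsupp.notMem_support_iff.1 hi, y_zero_eq (i + 1)]
    simp [Finsupp.single_apply]
  exact ⟨i, y (i + 1) i, (sub_eq_zero.1 y_zero_apply.symm).symm⟩

end Away

section Localization

variable {A N : Type*} [CommRing A] [AddCommGroup N] [Module A N]

lemma exists_pow_smul_eq_zero_of_associatedPrimes [IsNoetherianRing A] {a u : A}
    (h : ∀ P ∈ associatedPrimes A N, a ∈ P → u ∈ P) {x : N} (hx : a • x = 0) :
    ∃ m : ℕ, u ^ m • x = 0 := by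
  have u_mem_radical : u ∈ (Module.annihilator A (A ∙ x)).radical := by
    rw [← Ideal.sInf_minimalPrimes, Submodule.mem_sInf]
    intro P hP
    refine h P ?_ (hP.1.2 ?_)
    · exact associatedPrimes.subset_of_injective (A ∙ x).injective_subtype
        (Module.associatedPrimes.minimalPrimes_annihilator_subset_associatedPrimes A _ hP)
    · exact (Submodule.mem_annihilator_span_singleton x a).2 hx
  obtain ⟨m, hm⟩ := u_mem_radical
  exact ⟨m, (Submodule.mem_annihilator_span_singleton x _).1 hm⟩

lemma isSMulRegular_of_isLocalizedModule {N' : Type*} [AddCommGroup N'] [Module A N']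
    (S : Submonoid A) (f : N →ₗ[A] N') [IsLocalizedModule S f] {a : A}
    (h : ∀ x : N, a • x = 0 → ∃ s ∈ S, s • x = 0) : IsSMulRegular N' a := by
  refine isSMulRegular_iff_right_eq_zero_of_smul.2 fun y hy ↦ ?_
  obtain ⟨⟨x, s⟩, rfl⟩ := IsLocalizedModule.mk'_surjective S f y
  rw [Function.uncurry_apply_pair, ← IsLocalizedModule.mk'_smul,
    IsLocalizedModule.mk'_eq_zero'] at hy
  obtain ⟨c, hc⟩ := hy
  obtain ⟨d, hd, hdx⟩ := h (c • x) (by rwa [smul_comm])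
  exact (IsLocalizedModule.mk'_eq_zero' f s).2 ⟨⟨d, hd⟩ * c, by rwa [mul_smul]⟩

end Localization

lemma exists_lt_of_succ_le_coheight {α : Type*} [Preorder α] {x : α} {k : ℕ}
    (h : (k + 1 : ℕ) ≤ Order.coheight x) : ∃ y > x, (k : ℕ∞) ≤ Order.coheight y := by
  by_contra! hlt
  have : Order.coheight x ≤ k := Order.coheight_le_coe_iff.2 hlt
  exact (h.trans this).not_gt (by exact_mod_cast k.lt_succ_self)

section PrimeSpectrum

variable {A : Type*} [CommRing A] [IsNoetherianRing A]

lemma not_lt_of_mem_minimalPrimes_sup_span_singleton {q₀ r q : PrimeSpectrum A} {y : A}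
    (hq : q.asIdeal ∈ (q₀.asIdeal ⊔ Ideal.span {y}).minimalPrimes) (hr : q₀ < r) : ¬ r < q := by
  intro hrq
  have hy : y ∈ q.asIdeal := hq.1.2 (Ideal.mem_sup_right (Ideal.mem_span_singleton_self y))
  obtain ⟨p, hyp, hp, hpq⟩ := PrimeSpectrum.exist_mem_one_of_mem_two hr hrq hy
  refine hpq.not_ge (hq.2 ⟨p.isPrime, sup_le hp.le ?_⟩ hpq.le)
  exact (Ideal.span_singleton_le_iff_mem _).2 hyp

lemma exists_mem_forall_minimalPrimes_notMem {I : Ideal A} {q₁ q₂ : PrimeSpectrum A}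
    (hI : I ≤ q₁.asIdeal) (h : q₁ < q₂) : ∃ y ∈ q₂.asIdeal, ∀ r ∈ I.minimalPrimes, y ∉ r := by
  have not_subset : ¬ (q₂.asIdeal : Set A) ⊆ ⋃ r ∈ I.minimalPrimes, r := by
    refine (Ideal.subset_union_prime_finite (f := fun r ↦ r)
      (Ideal.finite_minimalPrimes_of_isNoetherianRing A I) ⊥ ⊥ fun r hr _ _ ↦ hr.1.1).not.2 ?_
    rintro ⟨r, hr, hqr⟩
    exact h.not_ge (hqr.trans (hr.2 ⟨q₁.isPrime, hI⟩ (le_trans (b := q₂.asIdeal) h.le hqr)))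
  simpa [Set.not_subset] using not_subset

lemma exists_lt_lt_notMem {q₀ q₁ q₂ : PrimeSpectrum A} (h₀₁ : q₀ < q₁) (h₁₂ : q₁ < q₂) {t : A}
    (ht : t ∉ q₀.asIdeal) : ∃ q, q₀ < q ∧ q < q₂ ∧ t ∉ q.asIdeal := by
  by_cases ht₁ : t ∈ q₁.asIdeal
  swap
  · exact ⟨q₁, h₀₁, h₁₂, ht₁⟩
  have sup_span_le {y : A} {p : Ideal A} (hp : q₀.asIdeal ≤ p) (hy : y ∈ p) :
      q₀.asIdeal ⊔ Ideal.span {y} ≤ p :=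
    sup_le hp ((Ideal.span_singleton_le_iff_mem _).2 hy)
  /- A prime `q ≤ q₂` minimal over `q₀ + (y)` has height one over `q₀`, so if it contained `t` it
  would be minimal over `q₀ + (t)`, and `y` avoids all those primes. -/
  obtain ⟨y, hy₂, hy⟩ := exists_mem_forall_minimalPrimes_notMem (sup_span_le h₀₁.le ht₁) h₁₂
  have hy₀ : y ∉ q₀.asIdeal := by
    obtain ⟨r, hr, -⟩ := Ideal.exists_minimalPrimes_le (sup_span_le h₀₁.le ht₁)
    exact fun h ↦ hy r hr (hr.1.2 (Ideal.mem_sup_left h))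
  obtain ⟨q, hq, hq₂⟩ := Ideal.exists_minimalPrimes_le (sup_span_le (h₀₁.trans h₁₂).le hy₂)
  have hq_prime : q.IsPrime := hq.1.1
  have h₀q : q₀.asIdeal ≤ q := le_sup_left.trans hq.1.2
  have hyq : y ∈ q := hq.1.2 (Ideal.mem_sup_right (Ideal.mem_span_singleton_self y))
  have htq : t ∉ q := by
    intro htq
    obtain ⟨r, hr, hrq⟩ := Ideal.exists_minimalPrimes_le (sup_span_le h₀q htq)
    have htr : t ∈ r := hr.1.2 (Ideal.mem_sup_right (Ideal.mem_span_singleton_self t))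
    exact not_lt_of_mem_minimalPrimes_sup_span_singleton (r := ⟨r, hr.1.1⟩) (q := ⟨q, hq_prime⟩) hq
      (lt_of_le_not_ge (le_sup_left.trans hr.1.2) fun h ↦ ht (h htr))
      (lt_of_le_not_ge hrq fun h ↦ hy r hr (h hyq))
  exact ⟨⟨q, hq_prime⟩, lt_of_le_not_ge h₀q fun h ↦ hy₀ (h hyq),
    lt_of_le_not_ge hq₂ fun h ↦ htq (h (h₁₂.le ht₁)), htq⟩

lemma exists_notMem_forall_associatedPrimes_mem (N : Type*) [AddCommGroup N] [Module A N]
    [Module.Finite A N] {q : PrimeSpectrum A}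
    (hq : q.asIdeal ∈ (Module.annihilator A N).minimalPrimes) :
    ∃ u ∉ q.asIdeal, ∀ P ∈ associatedPrimes A N, P ≠ q.asIdeal → u ∈ P := by
  have finite : (associatedPrimes A N \ {q.asIdeal}).Finite := (associatedPrimes.finite A N).sdiff
  have annihilator_le {P : Ideal A} (hP : IsAssociatedPrime P N) : Module.annihilator A N ≤ P :=
    Submodule.annihilator_top.ge.trans hP.annihilator_le
  have not_le : ¬ finite.toFinset.inf id ≤ q.asIdeal := by
    rw [Ideal.IsPrime.inf_le' q.isPrime]
    rintro ⟨P, hP, hPq⟩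
    obtain ⟨hP, hne⟩ := finite.mem_toFinset.1 hP
    exact hne (le_antisymm hPq (hq.2 ⟨hP.1, annihilator_le hP⟩ hPq))
  obtain ⟨u, hu, huq⟩ := SetLike.not_le_iff_exists.1 not_le
  exact ⟨u, huq, fun P hP hne ↦
    Submodule.mem_finsetInf.1 hu P (finite.mem_toFinset.2 ⟨hP, hne⟩)⟩

end PrimeSpectrum

section Sequence

variable {A : Type*} [CommRing A]

lemma isSMulRegular_away_tensorProduct [IsNoetherianRing A] {N : Type*} [AddCommGroup N]
    [Module A N] {a u s : A} (h : ∀ P ∈ associatedPrimes A N, a ∈ P → u ∈ P) (hus : u ∣ s) :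
    IsSMulRegular (Localization.Away s ⊗[A] N) a := by
  refine isSMulRegular_of_isLocalizedModule (.powers s)
    (TensorProduct.mk A (Localization.Away s) N 1) fun x hx ↦ ?_
  obtain ⟨m, hm⟩ := exists_pow_smul_eq_zero_of_associatedPrimes h hx
  obtain ⟨c, rfl⟩ := hus
  exact ⟨_, ⟨m, rfl⟩, by simp only [mul_comm u, mul_pow, mul_smul, hm, smul_zero]⟩

lemma isWeaklyRegular_tensorProduct_cons {T N : Type*} [AddCommGroup T] [Module A T]
    [AddCommGroup N] [Module A N] {a : A} {rs : List A} (ha : IsSMulRegular (T ⊗[A] N) a)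
    (hrs : IsWeaklyRegular (T ⊗[A] QuotSMulTop a N) rs) :
    IsWeaklyRegular (T ⊗[A] N) (a :: rs) :=
  (isWeaklyRegular_cons_iff _ a rs).2 ⟨ha,
    ((QuotSMulTop.tensorQuotSMulTopEquivQuotSMulTop a T N).isWeaklyRegular_congr rs).1 hrs⟩

/- The divisibility `t ∣ s` is what makes the induction work: it keeps the elements chosen regular
at earlier stages regular after inverting `s`. -/
theorem exists_isWeaklyRegular_away [IsNoetherianRing A] {N : Type*} [AddCommGroup N] [Module A N]
    [Module.Finite A N] (k : ℕ) {q₀ : PrimeSpectrum A} (hq₀ : q₀ ∈ Module.support A N) {t : A}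
    (ht : t ∉ q₀.asIdeal) (hk : (k + 1 : ℕ) ≤ Order.coheight q₀) :
    ∃ (s : A) (rs : List A) (q p : PrimeSpectrum A), t ∣ s ∧ q ≤ p ∧ s ∉ q.asIdeal ∧
      s ∈ p.asIdeal ∧ q ∈ Module.support A N ∧ (∀ r ∈ rs, r ∈ q.asIdeal) ∧ rs.length = k ∧
      IsWeaklyRegular (Localization.Away s ⊗[A] N) rs := by
  induction k generalizing N q₀ t with
  | zero =>
    obtain ⟨p, hp, -⟩ := exists_lt_of_succ_le_coheight hk
    obtain ⟨x, hxp, hx⟩ := SetLike.exists_of_lt ((PrimeSpectrum.asIdeal_lt_asIdeal _ _).2 hp)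
    exact ⟨t * x, [], q₀, p, dvd_mul_right t x, hp.le, q₀.isPrime.mul_notMem ht hx,
      p.asIdeal.mul_mem_left t hxp, hq₀, by simp, rfl, .nil A _⟩
  | succ k ih =>
    obtain ⟨q₁, h₀₁, hk₁⟩ := exists_lt_of_succ_le_coheight hk
    obtain ⟨q₂, h₁₂, hk₂⟩ := exists_lt_of_succ_le_coheight hk₁
    obtain ⟨q, hq, hqq₀⟩ := Ideal.exists_minimalPrimes_le
      (Module.mem_support_iff_of_finite.1 hq₀)
    obtain ⟨q, rfl⟩ : ∃ q' : PrimeSpectrum A, q'.asIdeal = q := ⟨⟨q, hq.1.1⟩, rfl⟩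
    obtain ⟨u, huq, hu⟩ := exists_notMem_forall_associatedPrimes_mem N hq
    obtain ⟨q', hqq', hq'₂, htu⟩ := exists_lt_lt_notMem (lt_of_le_of_lt hqq₀ h₀₁) h₁₂
      (q.isPrime.mul_notMem (fun h ↦ ht (hqq₀ h)) huq)
    obtain ⟨a, haq', haq⟩ := SetLike.exists_of_lt ((PrimeSpectrum.asIdeal_lt_asIdeal _ _).2 hqq')
    have hq' : q' ∈ Module.support A (QuotSMulTop a N) := by
      rw [Module.support_quotSMulTop]
      exact ⟨Module.mem_support_iff_of_finite.2 (hq.1.2.trans hqq'.le), by simpa using haq'⟩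
    have hk' : (k + 1 : ℕ) ≤ Order.coheight q' := by
      push_cast
      exact (add_le_add_left hk₂ 1).trans (Order.coheight_add_one_le hq'₂)
    obtain ⟨s, rs, q, p, htus, hqp, hsq, hsp, hq, hrs, rfl, hreg⟩ := ih hq' htu hk'
    have ha : IsSMulRegular (Localization.Away s ⊗[A] N) a :=
      isSMulRegular_away_tensorProduct (fun P hP haP ↦ hu P hP fun h ↦ haq (h ▸ haP))
        ((dvd_mul_left u t).trans htus)
    rw [Module.support_quotSMulTop] at hq
    exact ⟨s, a :: rs, q, p, (dvd_mul_right t u).trans htus, hqp, hsq, hsp, hq.1,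
      List.forall_mem_cons.2 ⟨by simpa using hq.2, hrs⟩, rfl,
      isWeaklyRegular_tensorProduct_cons ha hreg⟩

end Sequence

lemma not_subsingleton_ext_away {A : Type u} [CommRing A] {s : A} {I : Ideal A}
    {q p : PrimeSpectrum A} (hI : I ≤ q.asIdeal) (hqp : q ≤ p) (hsq : s ∉ q.asIdeal)
    (hsp : s ∈ p.asIdeal) : ¬ Subsingleton (Abelian.Ext.{u}
      (ModuleCat.of A (Localization.Away s)) (ModuleCat.of A (ℕ →₀ A ⧸ I)) 1) := by
  intro h
  obtain ⟨i, y, hy⟩ := exists_pow_smul_eq_of_subsingleton_ext_away s (1 : A ⧸ I)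
  obtain ⟨c, rfl⟩ := Ideal.Quotient.mk_surjective y
  have mem_q : s ^ i * (1 - s * c) ∈ q.asIdeal := by
    have : s ^ i - s ^ (i + 1) * c ∈ I :=
      Ideal.Quotient.eq.1 (by simpa [Algebra.smul_def] using hy)
    convert hI this using 1
    ring
  have mem_p : 1 - s * c ∈ p.asIdeal :=
    hqp ((q.isPrime.mem_or_mem mem_q).resolve_left fun h ↦ hsq (q.isPrime.mem_of_pow_mem i h))
  refine p.isPrime.ne_top ((Ideal.eq_top_iff_one _).2 ?_)
  simpa using p.asIdeal.add_mem mem_p (p.asIdeal.mul_mem_right c hsp)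

theorem exists_projDim_eq_succ {A : Type u} [CommRing A] [IsNoetherianRing A] {n : ℕ}
    {q₀ : PrimeSpectrum A} (hn : (n + 1 : ℕ) ≤ Order.coheight q₀) :
    ∃ M : ModuleCat.{u} A, projDim A M = (n + 1 : ℕ) := by
  have hq₀ : q₀ ∈ Module.support A A := by
    simp [Module.mem_support_iff_of_finite, Module.annihilator_eq_bot.2]
  obtain ⟨s, rs, q, p, -, hqp, hsq, hsp, -, hrs, rfl, hreg⟩ :=
    exists_isWeaklyRegular_away n hq₀ q₀.isPrime.one_notMem hn
  rw [(TensorProduct.rid A (Localization.Away s)).isWeaklyRegular_congr] at hreg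
  let M := ModuleCat.of A
    (Localization.Away s ⧸ (Ideal.ofList rs • ⊤ : Submodule A (Localization.Away s)))
  let N := ModuleCat.of A (ℕ →₀ A ⧸ Ideal.ofList rs)
  have hN : ∀ r ∈ rs, r ∈ Module.annihilator A N := by
    intro r hr
    refine Module.mem_annihilator.2 fun x ↦ Finsupp.ext fun i ↦ ?_
    have : r ∈ Module.annihilator A (A ⧸ Ideal.ofList rs) := by
      rw [Ideal.annihilator_quotient]
      exact Ideal.subset_span hr
    exact Module.mem_annihilator.1 this (x i)
  have hM : HasProjectiveDimensionLE M (rs.length + 1) := by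
    have := hasProjectiveDimensionLT_quotient_of_isWeaklyRegular hreg 2
    rwa [add_comm 2] at this
  refine ⟨M, projDim_eq_succ M N rs.length fun hExt ↦ ?_⟩
  rw [add_comm] at hExt
  exact not_subsingleton_ext_away (Ideal.span_le.2 hrs) hqp hsq hsp
    (subsingleton_ext_of_isWeaklyRegular hreg hN 1)

theorem exists_module_projDim_eq
    (A : Type u) [CommRing A] [IsNoetherianRing A] [Nontrivial A]
    (n : ℕ) (hn : (n : WithBot ℕ∞) ≤ ringKrullDim A) :
    ∃ M : ModuleCat.{u} A, projDim A M = (n : ℕ∞) := by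
  cases n with
  | zero =>
    have : Projective (ModuleCat.of A A) := (IsProjective.iff_projective _).1 inferInstance
    exact ⟨ModuleCat.of A A, le_antisymm ((projDim_le_natCast_iff _ 0).2 inferInstance) bot_le⟩
  | succ n =>
    obtain ⟨l, hl⟩ := Order.le_krullDim_iff.1 hn
    exact exists_projDim_eq_succ (hl ▸ Order.length_le_coheight_head)
end

section
/- Let A be a commutative noetherian ring of Krull dimension at least 1 (possibly infinite). Then for every natural number n with 1 ≤ n ≤ dim(A) there exists a prime ideal p of A such that the localization A_p is a Cohen–Macaulay local ring, the height of p equals n − 1, and dim(A/p) ≥ 1. -/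
/-!
STATEMENT 8: Let A be a commutative noetherian ring of Krull dimension at least 1
(possibly infinite).  Then for every natural number n with 1 ≤ n ≤ dim(A) there exists a
prime ideal p of A such that the localization A_p is a Cohen–Macaulay local ring, the
height of p (i.e. the Krull dimension of A_p) equals n − 1, and dim(A/p) ≥ 1.
-/

open CategoryTheory

universe u

/-- The depth of a commutative local ring `A`: the least `i : ℕ` such that
`Ext_A^i(k, A) ≠ 0`, where `k` is the residue field of `A` (`∞` if no such `i` exists). -/
noncomputable def ringDepth (A : Type u) [CommRing A] [IsLocalRing A] : ℕ∞ :=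
  sInf {n : ℕ∞ | ∃ i : ℕ, (i : ℕ∞) = n ∧
    ¬ Subsingleton
      (extGroup A (ModuleCat.of A (IsLocalRing.ResidueField A)) (ModuleCat.of A A) i)}

/-- A commutative noetherian local ring is Cohen–Macaulay if its depth equals its Krull
dimension. -/
def IsCohenMacaulayLocalRing (R : Type u) [CommRing R] [IsLocalRing R] : Prop :=
  (ringDepth R : WithBot ℕ∞) = ringKrullDim R

/-!
Prime avoidance produces a sequence `x₁, …, x_k` in a prime `q` of height greater than `k` such
that `x_{i+1}` lies in no associated prime of `A ⧸ (x₁, …, x_i)` except those containing `q`. Let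
`p ≤ q` be minimal over `(x₁, …, x_k)`. Krull's height theorem bounds the height of `p` by `k`, so
`p ≠ q`. Localizing at `p` removes all primes containing `q`, so the sequence becomes regular in
`A_p`. Hence `k ≤ depth A_p ≤ dim A_p ≤ k`.
-/

section Ext

open Limits

variable {R C : Type*} [Ring R] [Category* C] [Abelian C] [Linear R C]

lemma exactAt_linearYonedaObj_zero_iff (K : ChainComplex C ℕ) (Y : C) :
    (K.linearYonedaObj R Y).ExactAt 0 ↔ ∀ f : K.X 0 ⟶ Y, K.d 1 0 ≫ f = 0 → f = 0 := by
  rw [HomologicalComplex.exactAt_iff' _ 0 0 1 (by simp) (by simp), ShortComplex.moduleCat_exact_iff]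
  refine forall₂_congr fun f _ ↦ ⟨?_, fun hf ↦ ⟨0, (map_zero _).trans hf.symm⟩⟩
  rintro ⟨(g : K.X 0 ⟶ Y), rfl⟩
  change K.d 0 0 ≫ g = 0
  rw [K.shape 0 0 (by simp), zero_comp]

lemma exactAt_linearYonedaObj_succ_iff (K : ChainComplex C ℕ) (Y : C) (i : ℕ) :
    (K.linearYonedaObj R Y).ExactAt (i + 1) ↔
      ∀ f : K.X (i + 1) ⟶ Y, K.d (i + 2) (i + 1) ≫ f = 0 →
        ∃ g : K.X i ⟶ Y, K.d (i + 1) i ≫ g = f := by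
  rw [HomologicalComplex.exactAt_iff' _ i (i + 1) (i + 2) (by simp) (by simp),
    ShortComplex.moduleCat_exact_iff]
  rfl

variable {X : C} (P : ProjectiveResolution X) (Y : C)

lemma projectiveResolution_exactAt_zero_iff_subsingleton_hom :
    (P.complex.linearYonedaObj R Y).ExactAt 0 ↔ Subsingleton (X ⟶ Y) := by
  rw [exactAt_linearYonedaObj_zero_iff, subsingleton_iff_forall_eq 0]
  constructor
  · intro h (f : ((ChainComplex.single₀ C).obj X).X 0 ⟶ Y)
    refine (cancel_epi (P.π.f 0)).1 ((h _ ?_).trans comp_zero.symm)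
    rw [← Category.assoc, P.complex_d_comp_π_f_zero, zero_comp]
  · intro h f hf
    obtain ⟨g, rfl⟩ := CokernelCofork.IsColimit.desc' P.isColimitCokernelCofork f hf
    exact (congrArg _ (h g)).trans comp_zero

lemma projectiveResolution_exactAt_iff_subsingleton_ext [HasExt C] (i : ℕ) :
    (P.complex.linearYonedaObj R Y).ExactAt i ↔ Subsingleton (Abelian.Ext X Y i) := by
  cases i with
  | zero =>
    rw [projectiveResolution_exactAt_zero_iff_subsingleton_hom,
      Abelian.Ext.addEquiv₀.subsingleton_congr]
  | succ i =>
    rw [exactAt_linearYonedaObj_succ_iff, subsingleton_iff_forall_eq 0]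
    constructor
    · intro h α
      obtain ⟨f, hf, rfl⟩ := P.extMk_surjective α (i + 2) rfl
      exact (P.extMk_eq_zero_iff f _ rfl hf i rfl).2 (h f hf)
    · intro h f hf
      exact (P.extMk_eq_zero_iff f _ rfl hf i rfl).1 (h _)

lemma subsingleton_leftDerived_ext_iff_subsingleton_ext [EnoughProjectives C] [HasExt C]
    (X Y : C) (i : ℕ) :
    Subsingleton (((Ext R C i).obj (Opposite.op X)).obj Y) ↔ Subsingleton (Abelian.Ext X Y i) := by
  obtain ⟨P⟩ : Nonempty (ProjectiveResolution X) := HasProjectiveResolution.out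
  rw [← ModuleCat.isZero_iff_subsingleton, (P.isoExt i Y).isZero_iff,
    ← HomologicalComplex.exactAt_iff_isZero_homology,
    projectiveResolution_exactAt_iff_subsingleton_ext]

end Ext

section Depth

open RingTheory.Sequence Ideal IsLocalRing

lemma natCast_le_ringDepth_iff (R : Type u) [CommRing R] [IsLocalRing R] (n : ℕ) :
    n ≤ ringDepth R ↔ ∀ i < n, Subsingleton
      (extGroup R (ModuleCat.of R (ResidueField R)) (ModuleCat.of R R) i) := by
  simp only [ringDepth, le_sInf_iff, Set.mem_ofPred_eq, forall_exists_index, and_imp]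
  constructor
  · exact fun h i hi ↦ by_contra fun hext ↦ (h _ i rfl hext).not_gt (Nat.cast_lt.2 hi)
  · rintro h _ i rfl hext
    exact Nat.cast_le.2 (not_lt.1 fun hi ↦ hext (h i hi))

lemma length_le_ringKrullDim_of_isRegular {R : Type*} [CommRing R] [IsNoetherianRing R]
    [IsLocalRing R] {rs : List R} (hrs : IsRegular R rs) :
    (rs.length : WithBot ℕ∞) ≤ ringKrullDim R := by
  have : Nontrivial (R ⧸ ofList rs) :=
    Ideal.Quotient.nontrivial_iff.2 fun h ↦ hrs.top_ne_smul (by simp [h])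
  rw [← ringKrullDim_add_length_eq_ringKrullDim_of_isRegular rs hrs]
  exact le_add_of_nonneg_left ringKrullDim_nonneg_of_nontrivial

variable {R : Type u} [CommRing R] [IsNoetherianRing R] [IsLocalRing R]

lemma natCast_le_ringDepth_iff_exists_isRegular (n : ℕ) :
    n ≤ ringDepth R ↔
      ∃ rs : List R, rs.length = n ∧ (∀ r ∈ rs, r ∈ maximalIdeal R) ∧ IsRegular R rs := by
  have hlt : maximalIdeal R • (⊤ : Submodule R (ModuleCat.of R R)) < ⊤ := by
    change maximalIdeal R • (⊤ : Ideal R) < ⊤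
    simpa [lt_top_iff_ne_top] using (maximalIdeal.isMaximal R).ne_top
  have : Module.Finite R (ModuleCat.of R (ResidueField R)) :=
    inferInstanceAs (Module.Finite R (R ⧸ maximalIdeal R))
  have hsupp : Module.support R (ModuleCat.of R (ResidueField R)) =
      PrimeSpectrum.zeroLocus (maximalIdeal R) := by
    change Module.support R (R ⧸ maximalIdeal R) = _
    rw [Module.support_eq_zeroLocus, annihilator_quotient]
  simp only [natCast_le_ringDepth_iff, extGroup,
    subsingleton_leftDerived_ext_iff_subsingleton_ext]
  constructor
  · exact ModuleCat.exists_isRegular_of_exists_subsingleton_ext _ n _ hlt _ hsupp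
  · rintro ⟨rs, rfl, hmem, hrs⟩
    exact ModuleCat.subsingleton_ext_of_exists_isRegular _ _ hsupp.subset _ hlt rs hmem hrs

lemma ringDepth_le_ringKrullDim : (ringDepth R : WithBot ℕ∞) ≤ ringKrullDim R := by
  obtain ⟨d, hd⟩ := WithBot.ne_bot_iff_exists.1 (ringKrullDim_ne_bot (R := R))
  rw [← hd, WithBot.coe_le_coe]
  refine ENat.forall_natCast_le_iff_le.1 fun n hn ↦ ?_
  obtain ⟨rs, rfl, -, hrs⟩ := (natCast_le_ringDepth_iff_exists_isRegular n).1 hn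
  exact WithBot.coe_le_coe.1 (hd ▸ length_le_ringKrullDim_of_isRegular hrs)

lemma isCohenMacaulayLocalRing_of_isRegular {rs : List R}
    (hmem : ∀ r ∈ rs, r ∈ maximalIdeal R) (hrs : IsRegular R rs)
    (hdim : ringKrullDim R ≤ rs.length) : IsCohenMacaulayLocalRing R :=
  have hdepth : rs.length ≤ ringDepth R :=
    (natCast_le_ringDepth_iff_exists_isRegular _).2 ⟨rs, rfl, hmem, hrs⟩
  ringDepth_le_ringKrullDim.antisymm (hdim.trans (WithBot.coe_le_coe.2 hdepth))

end Depth

section FilterRegular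

open RingTheory.Sequence Ideal Module.associatedPrimes

section Definitions

variable {R : Type*} (M : Type*) [CommRing R] [AddCommGroup M] [Module R M]

/-- `x` is an `I`-filter-regular element on `M`: every associated prime of `M` that contains `x`
lies in `V(I)`. For `I = R` and `R` noetherian this is regularity of `x` on `M`. -/
def IsFilterSMulRegular (I : Ideal R) (x : R) : Prop :=
  ∀ P ∈ associatedPrimes R M, x ∈ P → I ≤ P

/-- `rs` is an `I`-filter-regular sequence on `M`: each of its entries is an `I`-filter-regular
element on the quotient of `M` by the preceding ones. Neither the membership of the entries in `I`
nor the nonvanishing of `M ⧸ rs M` is part of the definition; compare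
`RingTheory.Sequence.IsWeaklyRegular`. -/
def IsFilterRegular (I : Ideal R) (rs : List R) : Prop :=
  ∀ i (h : i < rs.length),
    IsFilterSMulRegular (M ⧸ (ofList (rs.take i) • ⊤ : Submodule R M)) I rs[i]

end Definitions

section Existence

variable {R M : Type*} [CommRing R] [AddCommGroup M] [Module R M]

lemma IsFilterRegular.concat {I : Ideal R} {rs : List R} {x : R} (hrs : IsFilterRegular M I rs)
    (hx : IsFilterSMulRegular (M ⧸ (ofList rs • ⊤ : Submodule R M)) I x) :
    IsFilterRegular M I (rs ++ [x]) := by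
  intro i hi
  obtain h | rfl : i < rs.length ∨ i = rs.length := by grind
  · rw [List.take_append_of_le_length h.le, List.getElem_append_left h]
    exact hrs i h
  · rw [List.take_left, List.getElem_concat_length rfl]
    exact hx

variable [IsNoetherianRing R] (M) [Module.Finite R M] (I : Ideal R)

lemma exists_mem_isFilterSMulRegular : ∃ x ∈ I, IsFilterSMulRegular M I x := by
  by_contra! h
  have hfin : {P ∈ associatedPrimes R M | ¬ I ≤ P}.Finite :=
    (associatedPrimes.finite R M).subset (Set.sep_subset _ _)
  have hcover : (I : Set R) ⊆ ⋃ P ∈ {P ∈ associatedPrimes R M | ¬ I ≤ P}, (P : Set R) := by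
    intro x hx
    obtain ⟨P, hP, hxP, hIP⟩ : ∃ P ∈ associatedPrimes R M, x ∈ P ∧ ¬ I ≤ P := by
      simpa [IsFilterSMulRegular] using h x hx
    exact Set.mem_biUnion ⟨hP, hIP⟩ hxP
  obtain ⟨P, hP, hIP⟩ :=
    (I.subset_union_prime_finite hfin (f := id) 0 0 fun _ hP _ _ ↦ hP.1.isPrime).1 hcover
  exact hP.2 hIP

lemma exists_isFilterRegular_length_eq (n : ℕ) :
    ∃ rs : List R, rs.length = n ∧ (∀ r ∈ rs, r ∈ I) ∧ IsFilterRegular M I rs := by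
  induction n with
  | zero => exact ⟨[], rfl, by simp, by simp [IsFilterRegular]⟩
  | succ n ih =>
    obtain ⟨rs, hlen, hmem, hrs⟩ := ih
    obtain ⟨x, hxI, hx⟩ :=
      exists_mem_isFilterSMulRegular (M ⧸ (ofList rs • ⊤ : Submodule R M)) I
    exact ⟨rs ++ [x], by simp [hlen], by grind, hrs.concat hx⟩

end Existence

section Localization

variable {R R' M M' : Type*} [CommRing R] [CommRing R'] [Algebra R R'] [AddCommGroup M]
  [Module R M] [AddCommGroup M'] [Module R M'] [Module R' M'] [IsScalarTower R R' M']
  (S : Submonoid R) [IsLocalization S R']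

variable (R') in
lemma localized'_ofList_smul_top (f : M →ₗ[R] M') [IsLocalizedModule S f] (rs : List R) :
    (ofList rs • ⊤ : Submodule R M).localized' R' S f =
      ofList (rs.map (algebraMap R R')) • ⊤ := by
  rw [Submodule.localized'_smul, localized'_eq_map, Submodule.localized'_top, map_ofList]

variable [IsNoetherianRing R] {I : Ideal R}

variable (R') in
lemma IsFilterSMulRegular.isSMulRegular_of_isLocalizedModule
    (f : M →ₗ[R] M') [IsLocalizedModule S f] {x s : R}
    (hx : IsFilterSMulRegular M I x) (hsI : s ∈ I) (hsS : s ∈ S) :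
    IsSMulRegular M' (algebraMap R R' x) := by
  have : IsNoetherianRing R' := IsLocalization.isNoetherianRing S R' ‹_›
  rw [isSMulRegular_iff_right_eq_zero_of_smul]
  by_contra! ⟨m, hxm, hm⟩
  obtain ⟨Q, hQ, hxQ⟩ : ∃ Q ∈ associatedPrimes R' M', algebraMap R R' x ∈ Q := by
    have hzero : algebraMap R R' x ∈ {r : R' | ∃ m : M', m ≠ 0 ∧ r • m = 0} := ⟨m, hm, hxm⟩
    simpa [← biUnion_associatedPrimes_eq_zero_divisors] using hzero
  have hQR : Q.comap (algebraMap R R') ∈ associatedPrimes R M := by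
    rwa [←
      preimage_comap_associatedPrimes_eq_associatedPrimes_of_isLocalizedModule S R' f] at hQ
  exact hQ.isPrime.ne_top <|
    Q.eq_top_of_isUnit_mem (hx _ hQR hxQ hsI) (IsLocalization.map_units R' ⟨s, hsS⟩)

variable (R') in
lemma IsFilterRegular.isWeaklyRegular_of_isLocalizedModule
    (f : M →ₗ[R] M') [IsLocalizedModule S f] {rs : List R} {s : R}
    (hrs : IsFilterRegular M I rs) (hsI : s ∈ I) (hsS : s ∈ S) :
    IsWeaklyRegular M' (rs.map (algebraMap R R')) where
  regular_mod_prev i hi := by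
    rw [List.length_map] at hi
    rw [List.getElem_map, ← List.map_take, ← localized'_ofList_smul_top R' S f]
    exact (hrs i hi).isSMulRegular_of_isLocalizedModule R' S
      (Submodule.toLocalizedQuotient' R' S f _) hsI hsS

end Localization

lemma IsFilterRegular.isRegular_localization_atPrime {R : Type*} [CommRing R] [IsNoetherianRing R]
    {I p : Ideal R} [p.IsPrime] {rs : List R} (hrs : IsFilterRegular R I rs) (hIp : ¬ I ≤ p)
    (hmem : ∀ r ∈ rs.map (algebraMap R (Localization.AtPrime p)),
      r ∈ IsLocalRing.maximalIdeal (Localization.AtPrime p)) :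
    IsRegular (Localization.AtPrime p) (rs.map (algebraMap R (Localization.AtPrime p))) := by
  obtain ⟨s, hsI, hsp⟩ := SetLike.not_le_iff_exists.1 hIp
  exact .of_isWeaklyRegular_of_mem_maximalIdeal _ hmem <|
    hrs.isWeaklyRegular_of_isLocalizedModule (Localization.AtPrime p) p.primeCompl
      (Algebra.linearMap R (Localization.AtPrime p)) hsI hsp

end FilterRegular

section Height

open Ideal RingTheory.Sequence

lemma map_algebraMap_mem_maximalIdeal {R : Type*} [CommRing R] {p : Ideal R} [p.IsPrime]
    {rs : List R} (hrs : ofList rs ≤ p) :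
    ∀ r ∈ rs.map (algebraMap R (Localization.AtPrime p)),
      r ∈ IsLocalRing.maximalIdeal (Localization.AtPrime p) := by
  simp only [List.forall_mem_map, IsLocalization.AtPrime.to_map_mem_maximal_iff _ p]
  exact fun r hr ↦ hrs (subset_span hr)

lemma height_le_length_of_mem_minimalPrimes_ofList {R : Type*} [CommRing R] [IsNoetherianRing R]
    {p : Ideal R} {rs : List R} (hp : p ∈ (ofList rs).minimalPrimes) : p.height ≤ rs.length := by
  classical
  rw [ofList, ← List.coe_toFinset] at hp
  exact (height_le_card_of_mem_minimalPrimes_span_finset hp).trans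
    (Nat.cast_le.2 rs.toFinset_card_le)

lemma exists_isPrime_natCast_le_height {R : Type*} [CommRing R] {n : ℕ}
    (hn : n ≤ ringKrullDim R) : ∃ q : Ideal R, q.IsPrime ∧ n ≤ q.height := by
  obtain ⟨l, rfl⟩ := Order.le_krullDim_iff.1 hn
  refine ⟨l.last.asIdeal, l.last.isPrime, ?_⟩
  rw [PrimeSpectrum.height_eq_orderHeight]
  exact Order.length_le_height_last

lemma one_le_ringKrullDim_quotient_of_lt {R : Type*} [CommRing R] {p q : Ideal R} [hp : p.IsPrime]
    [hq : q.IsPrime] (hpq : p < q) : 1 ≤ ringKrullDim (R ⧸ p) := by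
  rw [ringKrullDim_quotient, Order.one_le_krullDim_iff]
  exact ⟨⟨⟨p, hp⟩, le_refl p⟩, ⟨⟨q, hq⟩, hpq.le⟩, hpq⟩

lemma IsFilterRegular.isCohenMacaulayLocalRing_localization_of_mem_minimalPrimes
    {R : Type u} [CommRing R] [IsNoetherianRing R] {I p : Ideal R} [p.IsPrime] {rs : List R}
    (hrs : IsFilterRegular R I rs) (hIp : ¬ I ≤ p) (hp : p ∈ (ofList rs).minimalPrimes) :
    IsCohenMacaulayLocalRing (Localization.AtPrime p) ∧ p.height = rs.length := by
  have hmem := map_algebraMap_mem_maximalIdeal hp.1.2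
  have hreg := hrs.isRegular_localization_atPrime hIp hmem
  have hle := height_le_length_of_mem_minimalPrimes_ofList hp
  have hdim := IsLocalization.AtPrime.ringKrullDim_eq_height p (Localization.AtPrime p)
  have hge := length_le_ringKrullDim_of_isRegular hreg
  rw [hdim, List.length_map] at hge
  refine ⟨isCohenMacaulayLocalRing_of_isRegular hmem hreg ?_,
    hle.antisymm (WithBot.coe_le_coe.1 hge)⟩
  rw [hdim, List.length_map]
  exact WithBot.coe_le_coe.2 hle

lemma exists_lt_height_eq_isCohenMacaulayLocalRing {R : Type u} [CommRing R] [IsNoetherianRing R]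
    (q : Ideal R) [q.IsPrime] {k : ℕ} (hk : k < q.height) :
    ∃ (p : Ideal R) (_ : p.IsPrime), p < q ∧ p.height = k ∧
      IsCohenMacaulayLocalRing (Localization.AtPrime p) := by
  obtain ⟨rs, rfl, hmem, hrs⟩ := exists_isFilterRegular_length_eq R q k
  obtain ⟨p, hpmin, hpq⟩ := exists_minimalPrimes_le (span_le.2 hmem : ofList rs ≤ q)
  have hp : p.IsPrime := hpmin.isPrime
  have hqp : ¬ q ≤ p := fun hqp ↦ hk.not_ge <|
    (height_mono hqp).trans (height_le_length_of_mem_minimalPrimes_ofList hpmin)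
  obtain ⟨hCM, hheight⟩ :=
    hrs.isCohenMacaulayLocalRing_localization_of_mem_minimalPrimes hqp hpmin
  exact ⟨p, hp, lt_of_le_not_ge hpq hqp, hheight, hCM⟩

end Height

theorem exists_prime_cohenMacaulay_localization_of_height
    (A : Type u) [CommRing A] [IsNoetherianRing A]
    (hdim : 1 ≤ ringKrullDim A)
    (n : ℕ) (hn1 : 1 ≤ n) (hn : (n : WithBot ℕ∞) ≤ ringKrullDim A) :
    ∃ (p : Ideal A) (hp : p.IsPrime),
      letI := hp
      IsCohenMacaulayLocalRing (Localization.AtPrime p) ∧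
      ringKrullDim (Localization.AtPrime p) = ((n - 1 : ℕ) : WithBot ℕ∞) ∧
      1 ≤ ringKrullDim (A ⧸ p) := by
  obtain ⟨q, hq, hnq⟩ := exists_isPrime_natCast_le_height hn
  have hlt : ((n - 1 : ℕ) : ℕ∞) < q.height :=
    (Nat.cast_lt.2 (Nat.sub_one_lt_of_le hn1 le_rfl)).trans_le hnq
  obtain ⟨p, hp, hpq, hheight, hCM⟩ := exists_lt_height_eq_isCohenMacaulayLocalRing q hlt
  refine ⟨p, hp, hCM, ?_, one_le_ringKrullDim_quotient_of_lt hpq⟩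
  rw [IsLocalization.AtPrime.ringKrullDim_eq_height p, hheight]
  rfl
end

section
/- Let A be a commutative noetherian ring and let E be a faithfully injective A-module. Then for every A-module M, the injective dimension of Hom_A(M, E) over A equals the flat dimension of M over A. -/
/-!
STATEMENT 9: Let A be a commutative noetherian ring and let E be a faithfully injective
A-module.  Then for every A-module M, the injective dimension of Hom_A(M, E) over A
equals the flat dimension of M over A.
-/

open CategoryTheory

universe u

/-- `Tor^A_i(N, M)` as an `A`-module. -/
noncomputable abbrev torGroup (A : Type u) [CommRing A] (N M : ModuleCat.{u} A) (i : ℕ) :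
    ModuleCat A :=
  ((Tor (ModuleCat.{u} A) i).obj N).obj M

/-- The flat dimension of an `A`-module `M`, defined as the least `n : ℕ∞` such that
`Tor^A_i(N, M) = 0` for every `A`-module `N` and every `i > n` (and `∞` if no such `n` exists). -/
noncomputable def flatDim (A : Type u) [CommRing A] (M : ModuleCat.{u} A) : ℕ∞ :=
  sInf {n : ℕ∞ | ∀ (N : ModuleCat.{u} A) (i : ℕ), n < (i : ℕ∞) →
    Subsingleton (torGroup A N M i)}

/-- The injective dimension of an `A`-module `M`, defined as the least `n : ℕ∞` such that
`Ext_A^i(N, M) = 0` for every `A`-module `N` and every `i > n` (and `∞` if no such `n` exists). -/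
noncomputable def injDim (A : Type u) [CommRing A] (M : ModuleCat.{u} A) : ℕ∞ :=
  sInf {n : ℕ∞ | ∀ (N : ModuleCat.{u} A) (i : ℕ), n < (i : ℕ∞) →
    Subsingleton (extGroup A N M i)}

/-!
Let `P` be a projective resolution of `M`. Since `Hom(-, E)` is exact and sends flat modules to
injective ones, `Hom(P, E)` is an injective resolution of `Hom(M, E)`. Hence `Extⁿ(N, Hom(M, E))`
is the cohomology of `Hom(N, Hom(P, E)) ≅ Hom(N ⊗ P, E)`, and as `Hom(-, E)` also reflects
exactness, this cohomology vanishes exactly when the homology `Torₙ(N, M)` of `N ⊗ P` does.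
`Ext` is defined through projective resolutions of its first argument; the comparison with injective
resolutions of the second goes through `Abelian.Ext`, which both kinds of resolution compute.
-/

open TensorProduct

universe v w

section ExtResolution

variable {C : Type u} [Category.{v} C] [Abelian C]

lemma subsingleton_ext_succ_iff_exact_projectiveResolution (R : Type w) [Ring R]
    [Linear R C] [EnoughProjectives C] {X : C} (P : ProjectiveResolution X) (Y : C) (n : ℕ) :
    Subsingleton (((Ext R C (n + 1)).obj (Opposite.op X)).obj Y) ↔
      Function.Exact (Preadditive.leftComp Y (P.complex.d (n + 1) n))
        (Preadditive.leftComp Y (P.complex.d (n + 2) (n + 1))) := by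
  rw [← ModuleCat.isZero_iff_subsingleton, (P.isoExt (R := R) (n + 1) Y).isZero_iff,
    ← HomologicalComplex.exactAt_iff_isZero_homology,
    HomologicalComplex.exactAt_iff' _ n (n + 1) (n + 2) (by simp) (by simp),
    ShortComplex.ShortExact.moduleCat_exact_iff_function_exact]
  rfl

lemma subsingleton_abelianExt_succ_iff_exact_projectiveResolution [HasExt.{w} C]
    {X : C} (P : ProjectiveResolution X) (Y : C) (n : ℕ) :
    Subsingleton (Abelian.Ext X Y (n + 1)) ↔
      Function.Exact (Preadditive.leftComp Y (P.complex.d (n + 1) n))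
        (Preadditive.leftComp Y (P.complex.d (n + 2) (n + 1))) := by
  constructor
  · refine fun _ φ => ⟨fun hφ => ?_, ?_⟩
    · exact (P.extMk_eq_zero_iff φ (n + 2) rfl hφ n rfl).1 (Subsingleton.elim _ _)
    · rintro ⟨χ, rfl⟩
      change P.complex.d (n + 2) (n + 1) ≫ P.complex.d (n + 1) n ≫ χ = 0
      simp
  · refine fun h => subsingleton_of_forall_eq 0 fun α => ?_
    obtain ⟨φ, hφ, rfl⟩ := P.extMk_surjective α (n + 2) rfl
    exact (P.extMk_eq_zero_iff φ (n + 2) rfl hφ n rfl).2 ((h φ).1 hφ)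

lemma subsingleton_abelianExt_succ_iff_exact_injectiveResolution [HasExt.{w} C]
    (X : C) {Y : C} (I : InjectiveResolution Y) (n : ℕ) :
    Subsingleton (Abelian.Ext X Y (n + 1)) ↔
      Function.Exact (Preadditive.rightComp X (I.cocomplex.d n (n + 1)))
        (Preadditive.rightComp X (I.cocomplex.d (n + 1) (n + 2))) := by
  constructor
  · refine fun _ φ => ⟨fun hφ => ?_, ?_⟩
    · exact (I.extMk_eq_zero_iff φ (n + 2) rfl hφ n rfl).1 (Subsingleton.elim _ _)
    · rintro ⟨χ, rfl⟩
      change (χ ≫ I.cocomplex.d n (n + 1)) ≫ I.cocomplex.d (n + 1) (n + 2) = 0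
      simp
  · refine fun h => subsingleton_of_forall_eq 0 fun α => ?_
    obtain ⟨φ, hφ, rfl⟩ := I.extMk_surjective α (n + 2) rfl
    exact (I.extMk_eq_zero_iff φ (n + 2) rfl hφ n rfl).2 ((h φ).1 hφ)

lemma subsingleton_ext_succ_iff_exact_injectiveResolution (R : Type w) [Ring R] [Linear R C]
    [EnoughProjectives C] (X : C) {Y : C} (I : InjectiveResolution Y) (n : ℕ) :
    Subsingleton (((Ext R C (n + 1)).obj (Opposite.op X)).obj Y) ↔
      Function.Exact (Preadditive.rightComp X (I.cocomplex.d n (n + 1)))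
        (Preadditive.rightComp X (I.cocomplex.d (n + 1) (n + 2))) := by
  have := HasExt.standard C
  let P := projectiveResolution X
  rw [subsingleton_ext_succ_iff_exact_projectiveResolution R P,
    ← subsingleton_abelianExt_succ_iff_exact_projectiveResolution P,
    subsingleton_abelianExt_succ_iff_exact_injectiveResolution X I]

/-- The injective resolution given by an exact sequence `0 → X → K⁰ → K¹ → ⋯` of injective
objects `Kⁿ`. -/
noncomputable def injectiveResolutionOfExact {X : C} (K : CochainComplex C ℕ)
    (injective : ∀ n, Injective (K.X n)) (ι : X ⟶ K.X 0) [Mono ι] (ι_comp_d : ι ≫ K.d 0 1 = 0)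
    (exact_zero : (ShortComplex.mk ι (K.d 0 1) ι_comp_d).Exact)
    (exactAt_succ : ∀ n, K.ExactAt (n + 1)) : InjectiveResolution X where
  cocomplex := K
  ι := (CochainComplex.fromSingle₀Equiv _ _).symm ⟨ι, ι_comp_d⟩
  quasiIso.quasiIsoAt n := by
    cases n with
    | zero =>
      have ι_f_zero : ((CochainComplex.fromSingle₀Equiv K X).symm ⟨ι, ι_comp_d⟩).f 0 = ι := by simp
      rw [CochainComplex.quasiIsoAt₀_iff, ShortComplex.quasiIso_iff_of_zeros]
      · refine (ShortComplex.exact_and_mono_f_iff_of_iso ?_).2 ⟨exact_zero, ‹Mono ι›⟩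
        exact ShortComplex.isoMk (Iso.refl _) (Iso.refl _) (Iso.refl _)
          ((Category.id_comp _).trans (ι_f_zero.symm.trans (Category.comp_id _).symm))
          ((Category.id_comp _).trans (Category.comp_id _).symm)
      · rfl
      · rfl
      · exact K.shape 0 0 (by simp)
    | succ n =>
      rw [quasiIsoAt_iff_exactAt]
      · exact exactAt_succ n
      · exact CochainComplex.exactAt_succ_single_obj _ _

end ExtResolution

section FaithfullyInjective

/-- A faithfully injective module: an injective module `E` such that `Hom(M, E) = 0` forces
`M = 0`. As in `Module.Injective`, the test modules `M` live in the universe of `E`. -/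
class FaithfullyInjective (R : Type u) [Ring R] (E : Type v) [AddCommGroup E] [Module R E] :
    Prop extends Module.Injective R E where
  subsingleton_of_subsingleton_linearMap : ∀ (M : Type v) [AddCommGroup M] [Module R M],
    Subsingleton (M →ₗ[R] E) → Subsingleton M

variable {R : Type u} [Ring R] (E : Type v) [AddCommGroup E] [Module R E]
  {X Y Z : Type v} [AddCommGroup X] [AddCommGroup Y] [AddCommGroup Z]
  [Module R X] [Module R Y] [Module R Z]

lemma exact_precomp_of_exact [Module.Injective R E] {f : X →ₗ[R] Y} {g : Y →ₗ[R] Z}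
    (h : Function.Exact f g) :
    Function.Exact (fun χ : Z →ₗ[R] E => χ ∘ₗ g) (fun φ : Y →ₗ[R] E => φ ∘ₗ f) := by
  intro φ
  constructor
  · intro hφ
    have ker_le : LinearMap.ker g ≤ LinearMap.ker φ := by
      rw [h.linearMap_ker_eq]
      exact LinearMap.range_le_ker_iff.2 hφ
    obtain ⟨χ, hχ⟩ := Module.Injective.out ((LinearMap.ker g).liftQ g le_rfl)
      (LinearMap.ker_eq_bot.1 (Submodule.ker_liftQ_eq_bot' _ _ rfl))
      ((LinearMap.ker g).liftQ φ ker_le)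
    exact ⟨χ, LinearMap.ext fun y => hχ (Submodule.Quotient.mk y)⟩
  · rintro ⟨χ, rfl⟩
    simp only [LinearMap.comp_assoc, h.linearMap_comp_eq_zero, LinearMap.comp_zero]

variable (R) in
lemma eq_zero_of_forall_linearMap_apply_eq_zero [FaithfullyInjective R E] {x : X}
    (h : ∀ φ : X →ₗ[R] E, φ x = 0) : x = 0 := by
  have : Subsingleton (R ∙ x) := by
    refine FaithfullyInjective.subsingleton_of_subsingleton_linearMap (R := R) (E := E) _
      (subsingleton_of_forall_eq 0 fun ψ => ?_)
    obtain ⟨φ, hφ⟩ := Module.Injective.out (R ∙ x).subtype (R ∙ x).injective_subtype ψ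
    ext ⟨y, hy⟩
    obtain ⟨r, rfl⟩ := Submodule.mem_span_singleton.1 hy
    simp [← hφ, h φ]
  exact Submodule.span_singleton_eq_bot.1 (Submodule.subsingleton_iff_eq_bot.1 this)

theorem exact_precomp_iff [FaithfullyInjective R E] {f : X →ₗ[R] Y} {g : Y →ₗ[R] Z} :
    Function.Exact (fun χ : Z →ₗ[R] E => χ ∘ₗ g) (fun φ : Y →ₗ[R] E => φ ∘ₗ f) ↔
      Function.Exact f g := by
  refine ⟨fun h y => ⟨fun hy => ?_, ?_⟩, exact_precomp_of_exact E⟩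
  · rw [← LinearMap.coe_range, SetLike.mem_coe, ← Submodule.Quotient.mk_eq_zero]
    refine eq_zero_of_forall_linearMap_apply_eq_zero R E fun φ => ?_
    have hφ : (φ ∘ₗ (LinearMap.range f).mkQ) ∘ₗ f = 0 := by
      rw [LinearMap.comp_assoc, LinearMap.range_mkQ_comp, LinearMap.comp_zero]
    obtain ⟨χ, hχ⟩ := (h _).1 hφ
    calc φ ((LinearMap.range f).mkQ y) = χ (g y) := (LinearMap.congr_fun hχ y).symm
      _ = 0 := by rw [hy, map_zero]
  · rintro ⟨x, rfl⟩
    exact eq_zero_of_forall_linearMap_apply_eq_zero R E fun χ =>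
      LinearMap.congr_fun (h.apply_apply_eq_zero χ) x

end FaithfullyInjective

section HomResolution

variable {A : Type u} [CommRing A] (E : Type v) [AddCommGroup E] [Module A E]

lemma injective_linearMap_of_flat (P : Type v) [AddCommGroup P] [Module A P] [Module.Flat A P]
    [Module.Injective A E] : Module.Injective A (P →ₗ[A] E) where
  out X Y _ _ _ _ f hf g := by
    obtain ⟨h, hh⟩ := Module.Injective.out (f.rTensor P)
      (Module.Flat.rTensor_preserves_injective_linearMap f hf) (TensorProduct.lift g)
    exact ⟨TensorProduct.curry h, fun x => LinearMap.ext fun p => hh (x ⊗ₜ p)⟩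

/-- The cochain complex `Hom(K, E)` of a chain complex `K` of modules. -/
def homComplex (K : ChainComplex (ModuleCat.{v} A) ℕ) : CochainComplex (ModuleCat.{v} A) ℕ where
  X i := ModuleCat.of A (K.X i →ₗ[A] E)
  d i j := ModuleCat.ofHom (LinearMap.lcomp A E (K.d j i).hom)
  shape i j hij := by
    ext φ x
    simp [K.shape j i hij]
  d_comp_d' i j k _ _ := by
    ext φ x
    change φ ((K.d k j ≫ K.d j i).hom x) = 0
    simp

lemma exactAt_homComplex_succ [Module.Injective A E] {K : ChainComplex (ModuleCat.{v} A) ℕ} {n : ℕ}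
    (hK : K.ExactAt (n + 1)) : (homComplex E K).ExactAt (n + 1) := by
  rw [HomologicalComplex.exactAt_iff' _ (n + 2) (n + 1) n (by simp) (by simp),
    ShortComplex.ShortExact.moduleCat_exact_iff_function_exact] at hK
  rw [HomologicalComplex.exactAt_iff' _ n (n + 1) (n + 2) (by simp) (by simp),
    ShortComplex.ShortExact.moduleCat_exact_iff_function_exact]
  have exact_K : Function.Exact (K.d (n + 2) (n + 1)).hom (K.d (n + 1) n).hom := hK
  exact exact_precomp_of_exact E exact_K

lemma injective_homComplex_X [Small.{v} A] [Module.Injective A E]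
    (K : ChainComplex (ModuleCat.{v} A) ℕ) (n : ℕ) [Module.Flat A (K.X n)] :
    Injective ((homComplex E K).X n) :=
  have : Module.Injective A (K.X n →ₗ[A] E) := injective_linearMap_of_flat E _
  Module.injective_object_of_injective_module A (K.X n →ₗ[A] E)

lemma exact_rightComp_homComplex_iff (N : ModuleCat.{v} A) (K : ChainComplex (ModuleCat.{v} A) ℕ)
    (i j k : ℕ) :
    Function.Exact (Preadditive.rightComp N ((homComplex E K).d i j))
        (Preadditive.rightComp N ((homComplex E K).d j k)) ↔
      Function.Exact (fun χ : N ⊗[A] K.X i →ₗ[A] E => χ ∘ₗ (K.d j i).hom.lTensor N)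
        (fun φ : N ⊗[A] K.X j →ₗ[A] E => φ ∘ₗ (K.d k j).hom.lTensor N) := by
  let e (n : ℕ) : (N ⟶ (homComplex E K).X n) ≃+ (N ⊗[A] K.X n →ₗ[A] E) :=
    ModuleCat.homAddEquiv.trans (TensorProduct.lift.equiv (.id A) N (K.X n) E).toAddEquiv
  refine (Function.Exact.iff_of_ladder_addEquiv (e i) (e j) (e k)
    (g₁₂ := ((K.d j i).hom.lTensor N).lcomp A E |>.toAddMonoidHom)
    (g₂₃ := ((K.d k j).hom.lTensor N).lcomp A E |>.toAddMonoidHom) ?_ ?_).symm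
  · ext; rfl
  · ext; rfl

variable {M : ModuleCat.{v} A} (P : ProjectiveResolution M)

/-- The augmentation `P₀ → M` of a projective resolution `P` of a module `M`, as a linear map.
The morphism `P.π.f 0` has this type only after unfolding the complex concentrated in
degree `0`. -/
noncomputable def augmentation : P.complex.X 0 →ₗ[A] M :=
  (P.π.f 0 : P.complex.X 0 ⟶ M).hom

lemma augmentation_surjective : Function.Surjective (augmentation P) :=
  (ModuleCat.epi_iff_surjective (P.π.f 0)).1 inferInstance

lemma exact_d_augmentation : Function.Exact (P.complex.d 1 0).hom (augmentation P) :=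
  (ShortComplex.ShortExact.moduleCat_exact_iff_function_exact _).1 P.exact₀

/-- The injective resolution `Hom(P, E)` of `Hom(M, E)`, for a projective resolution `P` of `M`
and an injective module `E`. -/
noncomputable def homInjectiveResolution [Small.{v} A] [Module.Injective A E] :
    InjectiveResolution (ModuleCat.of A (M →ₗ[A] E)) :=
  have (n : ℕ) : Module.Flat A (P.complex.X n) :=
    have := (IsProjective.iff_projective _).2 (P.projective n)
    Module.Flat.of_projective
  let ι : ModuleCat.of A (M →ₗ[A] E) ⟶ (homComplex E P.complex).X 0 :=
    ModuleCat.ofHom ((augmentation P).lcomp A E)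
  have : Mono ι := (ModuleCat.mono_iff_injective _).2
    (LinearMap.lcomp_injective_of_surjective _ (augmentation_surjective P))
  have exact_zero := exact_precomp_of_exact E (exact_d_augmentation P)
  injectiveResolutionOfExact (homComplex E P.complex) (fun _ => injective_homComplex_X E _ _) ι
    (ModuleCat.hom_ext (LinearMap.ext exact_zero.apply_apply_eq_zero))
    ((ShortComplex.ShortExact.moduleCat_exact_iff_function_exact _).2 exact_zero)
    fun n => exactAt_homComplex_succ E (P.complex_exactAt_succ n)

end HomResolution

section Duality

variable {A : Type u} [CommRing A]

lemma subsingleton_torGroup_succ_iff_exact (N : ModuleCat.{u} A) {M : ModuleCat.{u} A}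
    (P : ProjectiveResolution M) (n : ℕ) :
    Subsingleton (torGroup A N M (n + 1)) ↔
      Function.Exact ((P.complex.d (n + 2) (n + 1)).hom.lTensor N)
        ((P.complex.d (n + 1) n).hom.lTensor N) := by
  rw [← ModuleCat.isZero_iff_subsingleton]
  let torIso := P.isoLeftDerivedObj ((MonoidalCategory.tensoringLeft _).obj N) (n + 1)
  refine torIso.isZero_iff.trans ?_
  refine (HomologicalComplex.exactAt_iff_isZero_homology _ _).symm.trans ?_
  rw [HomologicalComplex.exactAt_iff' _ (n + 2) (n + 1) n (by simp) (by simp),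
    ShortComplex.ShortExact.moduleCat_exact_iff_function_exact]
  rfl

theorem subsingleton_extGroup_linearMap_succ_iff (E : Type u) [AddCommGroup E] [Module A E]
    [FaithfullyInjective A E] (N M : ModuleCat.{u} A) (n : ℕ) :
    Subsingleton (extGroup A N (ModuleCat.of A (M →ₗ[A] E)) (n + 1)) ↔
      Subsingleton (torGroup A N M (n + 1)) := by
  let P := projectiveResolution M
  rw [subsingleton_ext_succ_iff_exact_injectiveResolution A N (homInjectiveResolution E P),
    subsingleton_torGroup_succ_iff_exact N P, ← exact_precomp_iff E]
  exact exact_rightComp_homComplex_iff E N P.complex n (n + 1) (n + 2)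

theorem injDim_hom_faithfullyInjective_eq_flatDim_general (E : Type u) [AddCommGroup E]
    [Module A E] [FaithfullyInjective A E] (M : ModuleCat.{u} A) :
    injDim A (ModuleCat.of A (M →ₗ[A] E)) = flatDim A M := by
  unfold injDim flatDim
  congr! 6 with _ N i hi
  obtain ⟨i, rfl⟩ := Nat.exists_eq_succ_of_ne_zero (n := i) (by rintro rfl; simp at hi)
  exact subsingleton_extGroup_linearMap_succ_iff E N M i

end Duality

theorem injDim_hom_faithfullyInjective_eq_flatDim
    (A : Type u) [CommRing A] [IsNoetherianRing A]
    (E : Type u) [AddCommGroup E] [Module A E]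
    (hinj : Module.Injective A E)
    (hfaith : ∀ (M : Type u) [AddCommGroup M] [Module A M],
      Subsingleton (M →ₗ[A] E) → Subsingleton M)
    (M : Type u) [AddCommGroup M] [Module A M] :
    injDim A (ModuleCat.of A (M →ₗ[A] E)) = flatDim A (ModuleCat.of A M) := by
  have : FaithfullyInjective A E := { hinj with subsingleton_of_subsingleton_linearMap := hfaith }
  exact injDim_hom_faithfullyInjective_eq_flatDim_general E (ModuleCat.of A M)
end
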